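/- Let s ≥ 1, let 0 ≤ q ≤ s, and set n = T_s + q. Then Δ_n = s(s−1) + max{A(λ) + B(λ) : λ a partition of n with supp(λ) = s}. Moreover s(s−1) ≤ Δ_n ≤ s(s−1) + q, and if q > 0 then Δ_n ≥ s(s−1) + 1. -/

import Mathlib

/-!
The parts of a partition with `r` distinct part sizes, `A` gaps and `B` repeated sizes sum to at
least `T r + A + B`: the distinct sizes, listed in increasing order, start from the staircase
`1, …, r` and shift up by at least one at each gap, and each repeated size costs a further part.
For a partition of `T s + q < T (s + 1)` this gives `r ≤ s`, and `A + B ≤ q` when `r = s`.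

Since `A, B ≤ r`, the degree is at most `r (r + 1)`, which is at most `s (s - 1)` as soon as
`r < s`. The layer `r = s` therefore carries the maximum once it is nonempty, and it contains the
staircase `1, …, s` with the part `q` added. For `q > 0` that part repeats a size, so `B ≥ 1`.
-/

namespace PartitionDegree

/-- The `m`-th triangular number. -/
def T (m : ℕ) : ℕ := m * (m + 1) / 2

/-- The number of distinct part sizes of a partition. -/
def supp {n : ℕ} (lam : n.Partition) : ℕ := lam.parts.toFinset.card

/-- The gap-bonus count: distinct part sizes `L ≥ 2` such that `L - 1` is not a part size. -/
def gapBonus {n : ℕ} (lam : n.Partition) : ℕ :=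
  (lam.parts.toFinset.filter (fun L => 2 ≤ L ∧ (L - 1) ∉ lam.parts)).card

/-- The multiplicity-bonus count: distinct part sizes occurring with multiplicity at least 2. -/
def multBonus {n : ℕ} (lam : n.Partition) : ℕ :=
  (lam.parts.toFinset.filter (fun L => 2 ≤ lam.parts.count L)).card

/-- The degree of a partition in the partition graph. -/
def deg {n : ℕ} (lam : n.Partition) : ℕ :=
  supp lam * (supp lam - 1) + gapBonus lam + multBonus lam

/-- The maximal degree over all partitions of `n`. -/
def maxDeg (n : ℕ) : ℕ := Finset.univ.sup (fun lam : n.Partition => deg lam)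

/-- `ρ(q)`: the maximum of `a + b` over pairs with `T a + T b ≤ q`. -/
noncomputable def rho (q : ℕ) : ℕ := sSup {c : ℕ | ∃ a b : ℕ, c = a + b ∧ T a + T b ≤ q}

/-- `mu` is the conjugate of `lam`: for each `k ≥ 1`, the multiplicity of `k` in `mu`
equals (number of parts of `lam` that are `≥ k`) minus (number of parts `≥ k + 1`). -/
def IsConjugate {n : ℕ} (lam mu : n.Partition) : Prop :=
  ∀ k : ℕ, 1 ≤ k →
    mu.parts.count k =
      Multiset.countP (fun p => k ≤ p) lam.parts -
        Multiset.countP (fun p => k + 1 ≤ p) lam.parts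

section Triangular

lemma T_eq_sum_range (m : ℕ) : T m = ∑ i ∈ Finset.range (m + 1), i := by
  rw [Finset.sum_range_id, Nat.add_sub_cancel, mul_comm, T]

lemma T_succ (m : ℕ) : T (m + 1) = T m + (m + 1) := by
  rw [T_eq_sum_range, T_eq_sum_range, Finset.sum_range_succ]

lemma T_monotone : Monotone T :=
  monotone_nat_of_le_succ fun m => by rw [T_succ]; exact Nat.le_add_right _ _

end Triangular

section Gaps

/-- The elements `L` of `S` counted by the gap bonus when `S` is the set of part sizes. The element
`1` is never a gap: the predecessor `0` is not an admissible part size. -/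
def gaps (S : Finset ℕ) : Finset ℕ := {L ∈ S | 2 ≤ L ∧ L - 1 ∉ S}

variable {S : Finset ℕ} {m : ℕ}

lemma gaps_insert_of_forall_lt (hlt : ∀ x ∈ S, x < m) :
    gaps (insert m S) = if 2 ≤ m ∧ m - 1 ∉ S then insert m (gaps S) else gaps S := by
  have gap_iff_of_mem : ∀ x ∈ S, (2 ≤ x ∧ x - 1 ∉ insert m S) ↔ (2 ≤ x ∧ x - 1 ∉ S) := by
    intro x hx
    have hne : x - 1 ≠ m := by have := hlt x hx; omega
    simp [hne]
  have gap_iff : (2 ≤ m ∧ m - 1 ∉ insert m S) ↔ (2 ≤ m ∧ m - 1 ∉ S) :=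
    and_congr_right fun hm => by simp [show m - 1 ≠ m by omega]
  simp only [gaps, Finset.filter_insert, Finset.filter_congr gap_iff_of_mem, gap_iff]

lemma card_gaps_insert_add_card_lt (h0 : 0 ∉ S) (hm : 0 < m) (hlt : ∀ x ∈ S, x < m) :
    (gaps (insert m S)).card + S.card < (gaps S).card + m := by
  have hpos : ∀ x ∈ S, 0 < x := fun x hx => Nat.pos_of_ne_zero (ne_of_mem_of_not_mem hx h0)
  rw [gaps_insert_of_forall_lt hlt]
  split_ifs with hgap
  · have hS : S ⊆ Finset.Ioo 0 (m - 1) := fun x hx => by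
      have hne : x ≠ m - 1 := ne_of_mem_of_not_mem hx hgap.2
      have := hlt x hx
      exact Finset.mem_Ioo.2 ⟨hpos x hx, by omega⟩
    have hcard := Finset.card_le_card hS
    have hinsert := Finset.card_insert_le m (gaps S)
    rw [Nat.card_Ioo] at hcard
    omega
  · have hS : S ⊆ Finset.Ioo 0 m := fun x hx => Finset.mem_Ioo.2 ⟨hpos x hx, hlt x hx⟩
    have hcard := Finset.card_le_card hS
    rw [Nat.card_Ioo] at hcard
    omega

lemma T_card_add_card_gaps_le_sum (h0 : 0 ∉ S) : T S.card + (gaps S).card ≤ ∑ x ∈ S, x := by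
  induction S using Finset.induction_on_max with
  | empty => simp [T, gaps]
  | insert m S hlt ih =>
    obtain ⟨hm, h0S⟩ : 0 ≠ m ∧ 0 ∉ S := by simpa using h0
    have hmS : m ∉ S := fun h => (hlt m h).false
    have hstep := card_gaps_insert_add_card_lt h0S (Nat.pos_of_ne_zero hm.symm) hlt
    rw [Finset.card_insert_of_notMem hmS, Finset.sum_insert hmS, T_succ]
    have := ih h0S
    omega

end Gaps

lemma sum_toFinset_add_card_repeated_le_sum {M : Multiset ℕ} (h0 : 0 ∉ M) :
    ∑ x ∈ M.toFinset, x + {x ∈ M.toFinset | 2 ≤ M.count x}.card ≤ M.sum := by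
  rw [Finset.sum_multiset_count, Finset.card_filter, ← Finset.sum_add_distrib]
  refine Finset.sum_le_sum fun x hx => ?_
  have hxM : x ∈ M := Multiset.mem_toFinset.1 hx
  have hpos : 0 < x := Nat.pos_of_ne_zero (ne_of_mem_of_not_mem hxM h0)
  have hcount : 0 < M.count x := Multiset.count_pos.2 hxM
  rw [smul_eq_mul]
  split_ifs with hrep
  · calc
      x + 1 ≤ 2 * x := by omega
      _ ≤ M.count x * x := Nat.mul_le_mul_right x hrep
  · exact Nat.le_mul_of_pos_left x hcount

section Degree

variable {n s q : ℕ}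

lemma gapBonus_eq_card_gaps (lam : n.Partition) :
    gapBonus lam = (gaps lam.parts.toFinset).card := by
  simp only [gapBonus, gaps, Multiset.mem_toFinset]

lemma T_supp_add_gapBonus_add_multBonus_le (lam : n.Partition) :
    T (supp lam) + gapBonus lam + multBonus lam ≤ n := by
  have h0 : 0 ∉ lam.parts := fun h => (lam.parts_pos h).false
  calc
    T (supp lam) + gapBonus lam + multBonus lam
      ≤ ∑ x ∈ lam.parts.toFinset, x + multBonus lam := by
        rw [gapBonus_eq_card_gaps]
        gcongr
        exact T_card_add_card_gaps_le_sum (by rwa [Multiset.mem_toFinset])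
    _ ≤ lam.parts.sum := sum_toFinset_add_card_repeated_le_sum h0
    _ = n := lam.parts_sum

lemma supp_le_of_lt_T_succ (hn : n < T (s + 1)) (lam : n.Partition) : supp lam ≤ s := by
  have hT := T_supp_add_gapBonus_add_multBonus_le lam
  have hlt : T (supp lam) < T (s + 1) := by omega
  exact Nat.lt_succ_iff.1 (T_monotone.reflect_lt hlt)

lemma deg_le_supp_mul_supp_add_one (lam : n.Partition) :
    deg lam ≤ supp lam * (supp lam + 1) := by
  have hA : gapBonus lam ≤ supp lam := Finset.card_filter_le _ _
  have hB : multBonus lam ≤ supp lam := Finset.card_filter_le _ _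
  calc
    deg lam ≤ supp lam * (supp lam - 1) + supp lam + supp lam := by unfold deg; gcongr
    _ = supp lam * (supp lam + 1) := by
      cases supp lam with
      | zero => rfl
      | succ r => rw [Nat.add_sub_cancel]; ring

lemma deg_le_of_supp_lt {lam : n.Partition} (h : supp lam < s) : deg lam ≤ s * (s - 1) := by
  calc
    deg lam ≤ supp lam * (supp lam + 1) := deg_le_supp_mul_supp_add_one lam
    _ ≤ (s - 1) * s := Nat.mul_le_mul (Nat.le_sub_one_of_lt h) h
    _ = s * (s - 1) := mul_comm _ _

lemma deg_of_supp_eq {lam : n.Partition} (h : supp lam = s) :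
    deg lam = s * (s - 1) + (gapBonus lam + multBonus lam) := by
  rw [deg, h, add_assoc]

lemma deg_le_maxDeg (lam : n.Partition) : deg lam ≤ maxDeg n :=
  Finset.le_sup (Finset.mem_univ lam)

lemma maxDeg_eq_of_supp_eq (hn : n < T (s + 1)) {mu : n.Partition} (hmu : supp mu = s) :
    maxDeg n =
      s * (s - 1) +
        (Finset.univ.filter (fun lam : n.Partition => supp lam = s)).sup
          (fun lam => gapBonus lam + multBonus lam) := by
  have hmem : mu ∈ Finset.univ.filter (fun lam : n.Partition => supp lam = s) := by simpa
  rw [Finset.add_sup ⟨mu, hmem⟩]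
  apply le_antisymm
  · refine Finset.sup_le fun lam _ => ?_
    rcases (supp_le_of_lt_T_succ hn lam).lt_or_eq with hlt | heq
    · exact Finset.le_sup_of_le hmem <| (deg_le_of_supp_lt hlt).trans (Nat.le_add_right _ _)
    · exact Finset.le_sup_of_le (by simpa using heq) (deg_of_supp_eq heq).le
  · refine Finset.sup_le fun lam hlam => ?_
    rw [← deg_of_supp_eq (Finset.mem_filter.1 hlam).2]
    exact deg_le_maxDeg lam

lemma gapBonus_add_multBonus_le_of_supp_eq {lam : (T s + q).Partition} (h : supp lam = s) :
    gapBonus lam + multBonus lam ≤ q := by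
  have hT := T_supp_add_gapBonus_add_multBonus_le lam
  rw [h] at hT
  omega

end Degree

section Staircase

/-- The partition of `T s + q` into the staircase `1, …, s` and one further part `q`, which attains
the largest possible support when `q ≤ s`. `Nat.Partition.ofSums` discards the part `0` of
`Finset.range (s + 1)`, and the part `q` when it vanishes. -/
def staircase (s q : ℕ) : (T s + q).Partition :=
  .ofSums (T s + q) (q ::ₘ (Finset.range (s + 1)).val) <| by
    rw [Multiset.sum_cons, add_comm, T_eq_sum_range, Finset.sum_val]; rfl

variable {s q : ℕ}

lemma toFinset_parts_staircase (hqs : q ≤ s) :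
    (staircase s q).parts.toFinset = Finset.Icc 1 s := by
  ext x
  simp only [staircase, Nat.Partition.ofSums, Multiset.mem_toFinset, Multiset.mem_filter,
    Multiset.mem_cons, Finset.mem_val, Finset.mem_range, Finset.mem_Icc]
  omega

lemma supp_staircase (hqs : q ≤ s) : supp (staircase s q) = s := by
  rw [supp, toFinset_parts_staircase hqs, Nat.card_Icc, Nat.add_sub_cancel]

lemma multBonus_staircase_pos (hq : 0 < q) (hqs : q ≤ s) : 0 < multBonus (staircase s q) := by
  have hmem : q ∈ Finset.range (s + 1) := Finset.mem_range_succ_iff.2 hqs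
  have hcount : (staircase s q).parts.count q = 2 := by
    rw [staircase, Nat.Partition.count_ofSums_of_ne_zero _ hq.ne', Multiset.count_cons_self,
      Multiset.count_eq_one_of_mem (Finset.nodup _) hmem]
  refine Finset.card_pos.2 ⟨q, Finset.mem_filter.2 ⟨?_, hcount.ge⟩⟩
  rw [toFinset_parts_staircase hqs]
  exact Finset.mem_Icc.2 ⟨hq, hqs⟩

end Staircase

/-- reduction to the support-maximal layer, with the bounds
`s(s-1) ≤ Δ_n ≤ s(s-1) + q`, and `Δ_n ≥ s(s-1) + 1` when `q > 0`. -/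
theorem support_maximal_reduction (s q : ℕ) (hs : 1 ≤ s) (hqs : q ≤ s) :
    maxDeg (T s + q) =
        s * (s - 1) +
          (Finset.univ.filter (fun lam : (T s + q).Partition => supp lam = s)).sup
            (fun lam => gapBonus lam + multBonus lam) ∧
      s * (s - 1) ≤ maxDeg (T s + q) ∧
      maxDeg (T s + q) ≤ s * (s - 1) + q ∧
      (0 < q → s * (s - 1) + 1 ≤ maxDeg (T s + q)) := by
  have hlt : T s + q < T (s + 1) := by rw [T_succ]; omega
  have hmu : supp (staircase s q) = s := supp_staircase hqs
  have hmax := maxDeg_eq_of_supp_eq hlt hmu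
  refine ⟨hmax, hmax ▸ Nat.le_add_right _ _, ?_, fun hq => ?_⟩
  · rw [hmax]
    gcongr
    exact Finset.sup_le fun lam hlam =>
      gapBonus_add_multBonus_le_of_supp_eq (Finset.mem_filter.1 hlam).2
  · calc
      s * (s - 1) + 1
        ≤ s * (s - 1) + (gapBonus (staircase s q) + multBonus (staircase s q)) := by
          have hB := multBonus_staircase_pos hq hqs
          gcongr
          omega
      _ = deg (staircase s q) := (deg_of_supp_eq hmu).symm
      _ ≤ maxDeg (T s + q) := deg_le_maxDeg _

end PartitionDegree
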